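/- The Riemann Hypothesis holds if and only if Re(λ_n) > 0 for every integer n ≥ 1, where λ_n is the n-th Li coefficient of the Riemann zeta function. (Li's criterion; the case F = ζ of the generalized Li criterion, Theorem 2.1.) -/

import Mathlib

open Complex

/-- The Riemann xi function `ξ(s) = s(s-1)π^{-s/2}Γ(s/2)ζ(s)`, written as the entire
function `s(s-1)Λ₀(s) + 1` where `Λ₀` is the completed Riemann zeta function. -/
noncomputable def riemannXi (s : ℂ) : ℂ := s * (s - 1) * completedRiemannZeta₀ s + 1

/-- The `n`-th Li coefficient `λ_n = (1/(n-1)!) dⁿ/dsⁿ [s^{n-1} log ξ(s)]` at `s = 1`. -/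
noncomputable def liCoeff (n : ℕ) : ℂ :=
  (1 / ((n - 1).factorial : ℂ)) *
    iteratedDeriv n (fun s => s ^ (n - 1) * Complex.log (riemannXi s)) 1

/-!
The substitution `s = 1 / (1 - z)` sends the disc `‖z‖ < 1` onto the half-plane `1 / 2 < re s`, and
turns `λ_n` into the `(n - 1)`-st Taylor coefficient at `0` of the logarithmic derivative of
`φ z = ξ (1 / (1 - z))`.

If all zeros lie on the critical line: `ξ` grows more slowly than `exp (ε * ‖s‖ ^ 2)` for every
`ε > 0`, so dividing out its zeros in a large disc about `1 / 2` leaves a function whose logarithmic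
derivative is almost constant near `1`; it vanishes at `1 / 2` by symmetry, so it is almost zero.
Hence `λ_n` is the limit of the sums of `1 - (1 - 1 / ρ) ^ n` over these zeros, in which every
summand has nonnegative real part because `‖1 - 1 / ρ‖ = 1`. As `ξ` has infinitely many zeros
(otherwise it would be a polynomial, yet it grows like a factorial), some summand is not zero.

Conversely, if the `λ_n` have nonnegative real parts, then so have the Taylor coefficients of
`log φ`, and as long as `φ` has no zeros this gives
`‖φ 0‖ ^ 4 ≤ ‖φ z‖ * ‖φ (conj z)‖ * ‖φ ‖z‖‖ ^ 2`. By continuity a zero of `φ` of smallest modulus in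
the disc would contradict this, so `ξ` has no zeros in `1 / 2 < re s`, nor, by symmetry, in
`re s < 1 / 2`.
-/

open Filter Topology Metric

section Factorization

variable {f : ℂ → ℂ}

lemma exists_differentiable_eq_pow_mul (hf : Differentiable ℂ f) (ρ : ℂ)
    (hρ : analyticOrderAt f ρ ≠ ⊤) :
    ∃ g, Differentiable ℂ g ∧ g ρ ≠ 0 ∧
      ∀ s, f s = (s - ρ) ^ analyticOrderNatAt f ρ * g s := by
  obtain ⟨g, hg, hgρ, hfg⟩ := (hf.analyticAt ρ).analyticOrderAt_ne_top.mp hρ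
  set m := analyticOrderNatAt f ρ
  let G : ℂ → ℂ := Function.update (fun s ↦ f s / (s - ρ) ^ m) ρ (g ρ)
  have hGne : ∀ s ≠ ρ, G s = f s / (s - ρ) ^ m := fun s hs ↦ Function.update_of_ne hs _ _
  have hGρ : G ρ = g ρ := Function.update_self _ _ _
  have hGg : G =ᶠ[𝓝 ρ] g := by
    filter_upwards [hfg] with s hs
    rcases eq_or_ne s ρ with rfl | hsρ
    · exact hGρ
    · rw [hGne s hsρ, hs, smul_eq_mul, mul_div_cancel_left₀]
      exact pow_ne_zero m (sub_ne_zero.mpr hsρ)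
  refine ⟨G, fun s ↦ ?_, hGρ ▸ hgρ, fun s ↦ ?_⟩
  · rcases eq_or_ne s ρ with rfl | hsρ
    · exact hg.differentiableAt.congr_of_eventuallyEq hGg
    · have hGs : G =ᶠ[𝓝 s] fun s ↦ f s / (s - ρ) ^ m :=
        (eventually_ne_nhds hsρ).mono hGne
      refine DifferentiableAt.congr_of_eventuallyEq ?_ hGs
      exact (hf s).div (by fun_prop) (pow_ne_zero m (sub_ne_zero.mpr hsρ))
  · rcases eq_or_ne s ρ with rfl | hsρ
    · simpa [hGρ] using hfg.self_of_nhds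
    · rw [hGne s hsρ, mul_div_cancel₀]
      exact pow_ne_zero m (sub_ne_zero.mpr hsρ)

lemma analyticOrderAt_ne_top_of_differentiable (hf : Differentiable ℂ f) {a : ℂ} (ha : f a ≠ 0)
    (ρ : ℂ) : analyticOrderAt f ρ ≠ ⊤ := by
  rw [Ne, AnalyticOnNhd.analyticOrderAt_eq_top_iff_eq_zero ρ hf.analyticAt]
  rintro rfl
  exact ha rfl

lemma finite_zeros_inter_of_isCompact (hf : Differentiable ℂ f) {a : ℂ} (ha : f a ≠ 0)
    {K : Set ℂ} (hK : IsCompact K) : ({ρ | f ρ = 0} ∩ K).Finite := by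
  have hcodisc : f ⁻¹' {0}ᶜ ∈ codiscreteWithin K :=
    codiscreteWithin_mono (Set.subset_univ K)
      (AnalyticOnNhd.preimage_zero_mem_codiscrete (fun z _ ↦ hf.analyticAt z) ha)
  exact (hK.finite_sdiff_of_mem_codiscreteWithin hcodisc).subset
    fun ρ hρ ↦ ⟨hρ.2, fun h ↦ h hρ.1⟩

/-- `zeroProd f S` is the monic polynomial function with the zeros of `f` in `S`, to the order
with which `f` vanishes there; it plays the role of a finite Hadamard product. -/
noncomputable def zeroProd (f : ℂ → ℂ) (S : Finset ℂ) (s : ℂ) : ℂ :=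
  ∏ ρ ∈ S, (s - ρ) ^ analyticOrderNatAt f ρ

lemma zeroProd_ne_zero {S : Finset ℂ} {s : ℂ} (hs : s ∉ S) : zeroProd f S s ≠ 0 :=
  Finset.prod_ne_zero_iff.mpr fun _ hρ ↦
    pow_ne_zero _ (sub_ne_zero.mpr fun h ↦ hs (h ▸ hρ))

lemma logDeriv_zeroProd {S : Finset ℂ} {s : ℂ} (hs : s ∉ S) :
    logDeriv (zeroProd f S) s = ∑ ρ ∈ S, analyticOrderNatAt f ρ / (s - ρ) := by
  have hsub : ∀ ρ ∈ S, s - ρ ≠ 0 := fun ρ hρ ↦ sub_ne_zero.mpr fun h ↦ hs (h ▸ hρ)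
  calc logDeriv (zeroProd f S) s
      = ∑ ρ ∈ S, logDeriv (fun z ↦ (z - ρ) ^ analyticOrderNatAt f ρ) s :=
        logDeriv_prod (fun ρ hρ ↦ pow_ne_zero _ (hsub ρ hρ)) fun ρ _ ↦ by fun_prop
    _ = ∑ ρ ∈ S, analyticOrderNatAt f ρ / (s - ρ) := by
        refine Finset.sum_congr rfl fun ρ _ ↦ ?_
        rw [logDeriv_fun_pow (by fun_prop), logDeriv_apply, deriv_sub_const, deriv_id'',
          mul_one_div]

lemma differentiable_zeroProd (f : ℂ → ℂ) (S : Finset ℂ) : Differentiable ℂ (zeroProd f S) := by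
  unfold zeroProd
  fun_prop

lemma exists_differentiable_eq_zeroProd_mul (hf : Differentiable ℂ f) {a : ℂ} (ha : f a ≠ 0)
    (S : Finset ℂ) :
    ∃ E, Differentiable ℂ E ∧ (∀ ρ ∈ S, E ρ ≠ 0) ∧ f = zeroProd f S * E := by
  induction S using Finset.induction_on with
  | empty => exact ⟨f, hf, by simp, by ext; simp [zeroProd]⟩
  | insert ρ S hρ ih =>
    obtain ⟨E, hE, hES, hfE⟩ := ih
    have hEa : E a ≠ 0 := right_ne_zero_of_mul (congrFun hfE a ▸ ha)
    have horder : analyticOrderNatAt E ρ = analyticOrderNatAt f ρ := by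
      have hP := (differentiable_zeroProd f S).analyticAt ρ
      conv_rhs => rw [analyticOrderNatAt, hfE, analyticOrderAt_mul hP (hE.analyticAt ρ),
        hP.analyticOrderAt_eq_zero.mpr (zeroProd_ne_zero hρ), zero_add, ← analyticOrderNatAt]
    obtain ⟨G, hG, hGρ, hEG⟩ := exists_differentiable_eq_pow_mul hE ρ
      (analyticOrderAt_ne_top_of_differentiable hE hEa ρ)
    refine ⟨G, hG, Finset.forall_mem_insert _ _ _ |>.mpr ⟨hGρ, fun σ hσ ↦ ?_⟩, funext fun s ↦ ?_⟩
    · exact right_ne_zero_of_mul (hEG σ ▸ hES σ hσ)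
    · rw [Pi.mul_apply, zeroProd, Finset.prod_insert hρ, ← horder, mul_right_comm, ← hEG s,
        mul_comm]
      exact congrFun hfE s

end Factorization

section LogDeriv

variable {f : ℂ → ℂ} {c : ℂ} {r : ℝ}

lemma exists_eq_exp_on_ball (hr : 0 < r) (hf : DifferentiableOn ℂ f (ball c r))
    (hne : ∀ z ∈ ball c r, f z ≠ 0) :
    ∃ L : ℂ → ℂ, L c = 0 ∧ (∀ z ∈ ball c r, HasDerivAt L (logDeriv f z) z) ∧
      ∀ z ∈ ball c r, f z = f c * exp (L z) := by
  have hlog : DifferentiableOn ℂ (logDeriv f) (ball c r) := (hf.deriv isOpen_ball).div hf hne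
  obtain ⟨L, hLc, hL⟩ := hlog.isExactOn_ball.with_val_at c 0
  refine ⟨L, hLc, hL, fun z hz ↦ ?_⟩
  have hconst : ∀ w ∈ ball c r, HasDerivAt (fun w ↦ f w * exp (-L w)) 0 w := fun w hw ↦ by
    have hfw := (hf.differentiableAt (isOpen_ball.mem_nhds hw)).hasDerivAt
    refine (hfw.mul (hL w hw).neg.cexp).congr_deriv ?_
    rw [logDeriv_apply]
    field_simp [hne w hw]
    ring
  have heq : f z * exp (-L z) = f c * exp (-L c) :=
    isOpen_ball.is_const_of_deriv_eq_zero (convex_ball c r).isPreconnected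
      (fun w hw ↦ (hconst w hw).differentiableAt.differentiableWithinAt)
      (fun w hw ↦ (hconst w hw).deriv) hz (mem_ball_self hr)
  rw [hLc, neg_zero, exp_zero, mul_one] at heq
  rw [← heq, mul_assoc, ← exp_add, neg_add_cancel, exp_zero, mul_one]

lemma norm_le_two_mul_of_re_le (hr : 0 < r) (hf : DifferentiableOn ℂ f (ball c r))
    (hfc : f c = 0) {A : ℝ} (hA : 0 < A) (hre : ∀ z ∈ ball c r, (f z).re ≤ A) {z : ℂ}
    (hz : ‖z - c‖ ≤ r / 2) : ‖f z‖ ≤ 2 * A := by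
  have hball : ∀ w ∈ ball (0 : ℂ) r, c + w ∈ ball c r := fun w hw ↦ by simpa using hw
  have hBC := borelCaratheodory_zero (f := fun w ↦ f (c + w)) (z := z - c) hA
    (hf.comp (by fun_prop) hball) (fun w hw ↦ hre _ (hball w hw)) hr
    (by rw [mem_ball_zero_iff]; linarith) (by simpa using hfc)
  rw [add_sub_cancel] at hBC
  refine hBC.trans ((div_le_iff₀ (by linarith)).mpr ?_)
  nlinarith

lemma norm_deriv_logDeriv_le (hf : DifferentiableOn ℂ f (ball c r))
    (hne : ∀ z ∈ ball c r, f z ≠ 0) {A : ℝ} (hA : 0 < A)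
    (hbound : ∀ z ∈ ball c r, ‖f z‖ ≤ Real.exp A * ‖f c‖) (hr : 0 < r) {z : ℂ}
    (hz : ‖z - c‖ ≤ r / 4) : ‖deriv (logDeriv f) z‖ ≤ 64 * A / r ^ 2 := by
  obtain ⟨L, hLc, hL, hexp⟩ := exists_eq_exp_on_ball hr hf hne
  have hLdiff : DifferentiableOn ℂ L (ball c r) := fun w hw ↦
    (hL w hw).differentiableAt.differentiableWithinAt
  have hre : ∀ w ∈ ball c r, (L w).re ≤ A := fun w hw ↦ by
    have := hbound w hw
    rw [hexp w hw, norm_mul, mul_comm, norm_exp] at this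
    exact Real.exp_le_exp.mp
      (le_of_mul_le_mul_right this (norm_pos_iff.mpr (hne c (mem_ball_self hr))))
  have hsub : ∀ w ∈ closedBall z (r / 4), ‖w - c‖ ≤ r / 2 := fun w hw ↦ by
    rw [mem_closedBall_iff_norm] at hw
    linarith [norm_sub_le_norm_sub_add_norm_sub w z c]
  have hcont : DiffContOnCl ℂ L (ball z (r / 4)) := by
    refine (hLdiff.mono fun w hw ↦ ?_).diffContOnCl_ball subset_rfl
    rw [mem_ball_iff_norm]
    linarith [hsub w hw]
  have hcauchy := norm_iteratedDeriv_le_of_forall_mem_sphere_norm_le 2 (by positivity) hcont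
    fun w hw ↦ norm_le_two_mul_of_re_le hr hLdiff hLc hA hre
      (hsub w (sphere_subset_closedBall hw))
  have hz' : z ∈ ball c r := by rw [mem_ball_iff_norm]; linarith
  have hL' : deriv L =ᶠ[𝓝 z] logDeriv f := by
    filter_upwards [isOpen_ball.mem_nhds hz'] with w hw using (hL w hw).deriv
  rw [iteratedDeriv_succ, iteratedDeriv_one, hL'.deriv_eq] at hcauchy
  refine hcauchy.trans_eq ?_
  rw [Nat.factorial_two]
  push_cast
  ring

lemma norm_logDeriv_sub_le (hr : 0 < r) (hf : DifferentiableOn ℂ f (ball c r))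
    (hne : ∀ z ∈ ball c r, f z ≠ 0) {A : ℝ} (hA : 0 < A)
    (hbound : ∀ z ∈ ball c r, ‖f z‖ ≤ Real.exp A * ‖f c‖) {s : ℂ} (hs : ‖s - c‖ ≤ r / 4) :
    ‖logDeriv f s - logDeriv f c‖ ≤ 64 * A / r ^ 2 * ‖s - c‖ := by
  refine (convex_closedBall c (r / 4)).norm_image_sub_le_of_norm_deriv_le (𝕜 := ℂ)
    (fun z hz ↦ ?_)
    (fun z hz ↦ norm_deriv_logDeriv_le hf hne hA hbound hr (mem_closedBall_iff_norm.mp hz))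
    (mem_closedBall_self (by positivity)) (mem_closedBall_iff_norm.mpr hs)
  have hz' : ball c r ∈ 𝓝 z := isOpen_ball.mem_nhds (closedBall_subset_ball (by linarith) hz)
  exact ((hf.deriv isOpen_ball).div hf hne).differentiableAt hz'

end LogDeriv

section XiLike

variable {f : ℂ → ℂ}

/-- The zeros of `f` in the closed disc of radius `R` about the centre `1 / 2` of the symmetry
`s ↦ 1 - s`; the value is `∅` if there are infinitely many. -/
noncomputable def zerosIn (f : ℂ → ℂ) (R : ℝ) : Finset ℂ :=
  open Classical in
  if h : ({ρ | f ρ = 0} ∩ closedBall (1 / 2) R).Finite then h.toFinset else ∅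

lemma mem_zerosIn (hf : Differentiable ℂ f) {a : ℂ} (ha : f a ≠ 0) {R : ℝ} {ρ : ℂ} :
    ρ ∈ zerosIn f R ↔ f ρ = 0 ∧ ‖ρ - 1 / 2‖ ≤ R := by
  rw [zerosIn, dif_pos (finite_zeros_inter_of_isCompact hf ha (isCompact_closedBall _ _)),
    Set.Finite.mem_toFinset, ← mem_closedBall_iff_norm]
  rfl

lemma analyticOrderNatAt_one_sub (hsymm : ∀ s, f (1 - s) = f s) (ρ : ℂ) :
    analyticOrderNatAt f (1 - ρ) = analyticOrderNatAt f ρ := by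
  have hcomp : f ∘ (1 - ·) = f := funext hsymm
  have hderiv : deriv (fun s : ℂ ↦ 1 - s) ρ ≠ 0 := by simp
  rw [analyticOrderNatAt, analyticOrderNatAt,
    ← analyticOrderAt_comp_of_deriv_ne_zero (by fun_prop) hderiv, hcomp]

lemma zeroProd_one_sub (hsymm : ∀ s, f (1 - s) = f s) {S : Finset ℂ}
    (hS : ∀ ρ ∈ S, 1 - ρ ∈ S) (s : ℂ) :
    zeroProd f S (1 - s) = (-1) ^ (∑ ρ ∈ S, analyticOrderNatAt f ρ) * zeroProd f S s := by
  rw [zeroProd, zeroProd, ← Finset.prod_pow_eq_pow_sum, ← Finset.prod_mul_distrib]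
  refine Finset.prod_nbij' (1 - ·) (1 - ·) hS hS (by simp) (by simp) fun ρ _ ↦ ?_
  rw [analyticOrderNatAt_one_sub hsymm, ← mul_pow]
  ring

lemma logDeriv_one_half_eq_zero {k : ℂ} (hsymm : ∀ s, f s = k * f (1 - s)) :
    logDeriv f (1 / 2) = 0 := by
  have hderiv : deriv f (1 / 2) = -(k * deriv f (1 / 2)) := by
    conv_lhs => rw [funext hsymm]
    rw [deriv_const_mul_field, deriv_comp_const_sub]
    norm_num
  have hval := hsymm (1 / 2)
  norm_num at hval
  rw [logDeriv_apply, div_eq_zero_iff]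
  refine or_iff_not_imp_right.mpr fun hne ↦ ?_
  have hk : k = 1 := mul_right_cancel₀ hne (by rw [one_mul, ← hval])
  rwa [hk, one_mul, self_eq_neg] at hderiv

/-- The properties of Riemann's `ξ` that its Li criterion rests on: an entire function, invariant
under `s ↦ 1 - s`, normalised at `1`, and of growth at most order `2`, minimal type. -/
structure XiLike (f : ℂ → ℂ) : Prop where
  differentiable : Differentiable ℂ f
  one_sub (s : ℂ) : f (1 - s) = f s
  map_one : f 1 = 1
  growth (ε : ℝ) (hε : 0 < ε) : ∃ C, ∀ s, ‖f s‖ ≤ C * Real.exp (ε * ‖s‖ ^ 2)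

namespace XiLike

lemma map_one_ne_zero (hf : XiLike f) : f 1 ≠ 0 := by simp [hf.map_one]

lemma mem_zerosIn_iff (hf : XiLike f) {R : ℝ} {ρ : ℂ} :
    ρ ∈ zerosIn f R ↔ f ρ = 0 ∧ ‖ρ - 1 / 2‖ ≤ R :=
  mem_zerosIn hf.differentiable hf.map_one_ne_zero

lemma one_sub_mem_zerosIn (hf : XiLike f) {R : ℝ} {ρ : ℂ} (hρ : ρ ∈ zerosIn f R) :
    1 - ρ ∈ zerosIn f R := by
  rw [hf.mem_zerosIn_iff] at hρ ⊢
  refine ⟨(hf.one_sub ρ).trans hρ.1, ?_⟩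
  rw [← norm_neg]
  convert! hρ.2 using 2
  ring

lemma eventually_norm_le_exp (hf : XiLike f) {ε : ℝ} (hε : 0 < ε) :
    ∀ᶠ R : ℝ in atTop, ∀ s, ‖s - 1 / 2‖ ≤ 3 * R → ‖f s‖ ≤ Real.exp (ε * R ^ 2) := by
  obtain ⟨C, hC⟩ := hf.growth (ε / 32) (by positivity)
  have hlim : Tendsto (fun R : ℝ ↦ Real.exp (ε / 2 * R ^ 2)) atTop atTop :=
    Real.tendsto_exp_atTop.comp
      ((tendsto_pow_atTop two_ne_zero).const_mul_atTop (by positivity))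
  filter_upwards [hlim.eventually_ge_atTop C, eventually_ge_atTop 1] with R hCR hR s hs
  have hsR : ‖s‖ ≤ 4 * R := by
    have h := norm_add_le (s - 1 / 2) (1 / 2)
    norm_num at h
    linarith
  calc ‖f s‖ ≤ C * Real.exp (ε / 32 * ‖s‖ ^ 2) := hC s
    _ ≤ Real.exp (ε / 2 * R ^ 2) * Real.exp (ε / 32 * (4 * R) ^ 2) := by gcongr
    _ = Real.exp (ε * R ^ 2) := by rw [← Real.exp_add]; ring_nf

lemma logDeriv_one_half_cofactor (hf : XiLike f) {R : ℝ} {E : ℂ → ℂ} (hE : Continuous E)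
    (hfE : f = zeroProd f (zerosIn f R) * E) : logDeriv E (1 / 2) = 0 := by
  set S := zerosIn f R
  set k : ℂ := (-1) ^ ∑ ρ ∈ S, analyticOrderNatAt f ρ
  have hoff : Set.EqOn E (fun s ↦ k * E (1 - s)) (S : Set ℂ)ᶜ := fun s hs ↦ by
    refine mul_left_cancel₀ (zeroProd_ne_zero (f := f) (S := S) hs) ?_
    calc zeroProd f S s * E s = f (1 - s) := by rw [hf.one_sub, ← Pi.mul_apply, ← hfE]
      _ = zeroProd f S (1 - s) * E (1 - s) := congrFun hfE _
      _ = zeroProd f S s * (k * E (1 - s)) := by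
        rw [zeroProd_one_sub hf.one_sub fun ρ ↦ hf.one_sub_mem_zerosIn]
        ring
  have hEq : E = fun s ↦ k * E (1 - s) :=
    Continuous.ext_on (S.countable_toSet.dense_compl ℂ) hE (by fun_prop) hoff
  exact logDeriv_one_half_eq_zero (congrFun hEq)

/-- The linear factors of `zeroProd` are at least as large on the circle of radius `3 * R` as at
`1`, so dividing by them costs nothing there; the maximum principle carries the bound inside. -/
lemma norm_cofactor_le (hf : XiLike f) {R M : ℝ} (hR : 1 / 2 ≤ R)
    (hM : ∀ s, ‖s - 1 / 2‖ ≤ 3 * R → ‖f s‖ ≤ M) {E : ℂ → ℂ} (hE : Differentiable ℂ E)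
    (hfE : f = zeroProd f (zerosIn f R) * E) {s : ℂ} (hs : ‖s - 1 / 2‖ ≤ 3 * R) :
    ‖E s‖ ≤ M * ‖E 1‖ := by
  set S := zerosIn f R
  have hfE' (s : ℂ) : ‖f s‖ = ‖zeroProd f S s‖ * ‖E s‖ := by
    rw [← norm_mul, ← Pi.mul_apply, ← hfE]
  have hP : ∀ z, ‖z - 1 / 2‖ = 3 * R → ‖zeroProd f S 1‖ ≤ ‖zeroProd f S z‖ := fun z hz ↦ by
    simp only [zeroProd, norm_prod, norm_pow]
    gcongr with ρ hρ
    have hρR := (hf.mem_zerosIn_iff.mp hρ).2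
    have h₁ := norm_sub_le_norm_sub_add_norm_sub 1 (1 / 2) ρ
    have h₂ := norm_sub_le_norm_sub_add_norm_sub z ρ (1 / 2)
    rw [norm_sub_rev (1 / 2) ρ] at h₁
    norm_num at h₁ h₂ hρR hz
    linarith
  have h1 : 1 ≤ ‖zeroProd f S 1‖ * ‖E 1‖ := by rw [← hfE', hf.map_one, norm_one]
  have hP1 : 0 < ‖zeroProd f S 1‖ := by
    by_contra! h
    nlinarith [norm_nonneg (E 1)]
  have hbdry : ∀ z ∈ frontier (ball (1 / 2 : ℂ) (3 * R)), ‖E z‖ ≤ M * ‖E 1‖ := fun z hz ↦ by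
    rw [frontier_ball _ (by positivity), mem_sphere_iff_norm] at hz
    have hMnn : 0 ≤ M := (norm_nonneg _).trans (hM z hz.le)
    refine le_of_mul_le_mul_left ?_ (hP1.trans_le (hP z hz))
    calc ‖zeroProd f S z‖ * ‖E z‖ = ‖f z‖ := (hfE' z).symm
      _ ≤ M * (‖zeroProd f S 1‖ * ‖E 1‖) := (hM z hz.le).trans (le_mul_of_one_le_right hMnn h1)
      _ ≤ M * (‖zeroProd f S z‖ * ‖E 1‖) := by gcongr; exact hP z hz
      _ = ‖zeroProd f S z‖ * (M * ‖E 1‖) := by ring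
  refine norm_le_of_forall_mem_frontier_norm_le isBounded_ball hE.diffContOnCl hbdry ?_
  rwa [closure_ball _ (by positivity), mem_closedBall_iff_norm]

lemma notMem_zerosIn (hf : XiLike f) {R : ℝ} {s : ℂ} (hs : f s ≠ 0) : s ∉ zerosIn f R :=
  fun h ↦ hs (hf.mem_zerosIn_iff.mp h).1

lemma logDeriv_cofactor (hf : XiLike f) {R : ℝ} {E : ℂ → ℂ} (hE : Differentiable ℂ E)
    (hfE : f = zeroProd f (zerosIn f R) * E) {s : ℂ} (hs : f s ≠ 0) :
    logDeriv E s =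
      logDeriv f s - ∑ ρ ∈ zerosIn f R, analyticOrderNatAt f ρ / (s - ρ) := by
  have hsS := hf.notMem_zerosIn (R := R) hs
  have hEs : E s ≠ 0 := right_ne_zero_of_mul (congrFun hfE s ▸ hs)
  have hmul := logDeriv_mul s (zeroProd_ne_zero hsS) hEs (differentiable_zeroProd f _ s) (hE s)
  rw [eq_sub_iff_add_eq', ← logDeriv_zeroProd hsS, ← hmul]
  exact congrArg (logDeriv · s) hfE.symm

lemma eventually_norm_logDeriv_sub_sum_le (hf : XiLike f) {ε : ℝ} (hε : 0 < ε) :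
    ∀ᶠ R : ℝ in atTop, ∀ s, f s ≠ 0 → ‖s - 1‖ ≤ R / 8 →
      ‖logDeriv f s - ∑ ρ ∈ zerosIn f R, analyticOrderNatAt f ρ / (s - ρ)‖ ≤
        ε * (‖s - 1‖ + 1 / 2) := by
  filter_upwards [hf.eventually_norm_le_exp (show 0 < ε / 256 by positivity),
    eventually_ge_atTop 4] with R hM hR s hs hsR
  obtain ⟨E, hE, hES, hfE⟩ :=
    exists_differentiable_eq_zeroProd_mul hf.differentiable hf.map_one_ne_zero (zerosIn f R)
  have hball : ∀ z ∈ ball (1 : ℂ) (R / 2), ‖z - 1 / 2‖ ≤ R := fun z hz ↦ by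
    have h := norm_sub_le_norm_sub_add_norm_sub z 1 (1 / 2)
    rw [mem_ball_iff_norm] at hz
    norm_num at h ⊢
    linarith
  have hne : ∀ z ∈ ball (1 : ℂ) (R / 2), E z ≠ 0 := fun z hz hEz ↦
    hES z (hf.mem_zerosIn_iff.mpr ⟨by rw [hfE, Pi.mul_apply, hEz, mul_zero], hball z hz⟩) hEz
  have hbound : ∀ z ∈ ball (1 : ℂ) (R / 2), ‖E z‖ ≤ Real.exp (ε / 256 * R ^ 2) * ‖E 1‖ :=
    fun z hz ↦ hf.norm_cofactor_le (by linarith) hM hE hfE ((hball z hz).trans (by linarith))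
  have hlip (z : ℂ) (hz : ‖z - 1‖ ≤ R / 8) :
      ‖logDeriv E z - logDeriv E 1‖ ≤ ε * ‖z - 1‖ := by
    refine (norm_logDeriv_sub_le (by positivity) hE.differentiableOn hne (by positivity) hbound
      (by linarith)).trans_eq ?_
    field_simp
    norm_num
  have hhalf := hlip (1 / 2) (by norm_num; linarith)
  rw [hf.logDeriv_one_half_cofactor hE.continuous hfE, zero_sub, norm_neg] at hhalf
  rw [← hf.logDeriv_cofactor hE hfE hs]
  calc ‖logDeriv E s‖ ≤ ‖logDeriv E s - logDeriv E 1‖ + ‖logDeriv E 1‖ :=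
        norm_le_norm_sub_add _ _
    _ ≤ ε * ‖s - 1‖ + ε * ‖(1 / 2 : ℂ) - 1‖ := add_le_add (hlip s hsR) hhalf
    _ = ε * (‖s - 1‖ + 1 / 2) := by norm_num; ring

lemma exists_polynomial_of_finite_zeros (hf : XiLike f) (hfin : {ρ | f ρ = 0}.Finite) :
    ∃ p : Polynomial ℂ, ∀ s, f s = p.eval s := by
  obtain ⟨R₀, hR₀⟩ := hfin.isBounded.subset_closedBall (1 / 2)
  have hconst : ∀ R ≥ R₀, zerosIn f R = zerosIn f R₀ := fun R hR ↦ by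
    ext ρ
    rw [hf.mem_zerosIn_iff, hf.mem_zerosIn_iff]
    refine and_congr_right fun hρ ↦ ?_
    have := mem_closedBall_iff_norm.mp (hR₀ hρ)
    exact iff_of_true (this.trans hR) this
  obtain ⟨E, hE, -, hfE⟩ :=
    exists_differentiable_eq_zeroProd_mul hf.differentiable hf.map_one_ne_zero (zerosIn f R₀)
  have hderiv : ∀ s, f s ≠ 0 → deriv E s = 0 := fun s hs ↦ by
    have hEs : E s ≠ 0 := right_ne_zero_of_mul (congrFun hfE s ▸ hs)
    suffices logDeriv E s = 0 from (div_eq_zero_iff.mp this).resolve_right hEs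
    refine norm_le_zero_iff.mp (le_of_forall_pos_le_add fun ε hε ↦ ?_)
    obtain ⟨R, hR, hRR₀, hsR⟩ := ((hf.eventually_norm_logDeriv_sub_sum_le
      (show 0 < ε / (‖s - 1‖ + 1 / 2) by positivity)).and
      ((eventually_ge_atTop R₀).and (eventually_ge_atTop (8 * ‖s - 1‖)))).exists
    have := hR s hs (by linarith)
    rwa [hconst R hRR₀, ← hf.logDeriv_cofactor hE hfE hs,
      div_mul_cancel₀ _ (by positivity), ← zero_add ε] at this
  have hderiv' : deriv E = 0 :=
    Continuous.ext_on (hfin.countable.dense_compl ℂ) hE.deriv.continuous continuous_zero hderiv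
  refine ⟨(∏ ρ ∈ zerosIn f R₀, (.X - .C ρ) ^ analyticOrderNatAt f ρ) * .C (E 0), fun s ↦ ?_⟩
  rw [Polynomial.eval_mul, Polynomial.eval_prod, Polynomial.eval_C,
    ← is_const_of_deriv_eq_zero hE (congrFun hderiv') s 0]
  simpa [zeroProd] using congrFun hfE s

end XiLike

end XiLike

section MobiusPullback

variable {f L : ℂ → ℂ}

/-- The Li coefficients `(1 / (n - 1)!) dⁿ/dsⁿ [s ^ (n - 1) log f(s)]` at `s = 1` of a function `f`
with `f 1 = 1`, so that `liCoeff = liCoeffOf riemannXi`. -/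
noncomputable def liCoeffOf (f : ℂ → ℂ) (n : ℕ) : ℂ :=
  (1 / ((n - 1).factorial : ℂ)) * iteratedDeriv n (fun s ↦ s ^ (n - 1) * log (f s)) 1

/-- The function `z ↦ f (1 / (1 - z))`. The substitution sends `0` to `1` and the unit disc onto the
half-plane `1 / 2 < re s`, and turns Li coefficients into Taylor coefficients at `0`. -/
noncomputable def mobiusPullback (f : ℂ → ℂ) (z : ℂ) : ℂ := f ((1 - z)⁻¹)

lemma hasDerivAt_inv_one_sub {z : ℂ} (hz : z ≠ 1) :
    HasDerivAt (fun z : ℂ ↦ (1 - z)⁻¹) ((1 - z)⁻¹ ^ 2) z := by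
  simpa using ((hasDerivAt_id' z).const_sub 1).fun_inv (sub_ne_zero.mpr hz.symm)

lemma iteratedDeriv_id_mul {s : ℂ} (hL : AnalyticAt ℂ L s) (n : ℕ) :
    iteratedDeriv (n + 1) (fun s ↦ s * L s) s =
      s * iteratedDeriv (n + 1) L s + (n + 1) * iteratedDeriv n L s := by
  rw [iteratedDeriv_fun_mul contDiffAt_fun_id hL.contDiffAt, Finset.sum_range_succ',
    Finset.sum_range_succ']
  simp [iteratedDeriv_fun_id]
  ring

lemma differentiableAt_iteratedDeriv {s : ℂ} (hL : AnalyticAt ℂ L s) (n : ℕ) :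
    DifferentiableAt ℂ (iteratedDeriv n L) s := by
  rw [iteratedDeriv_eq_iterate]
  exact (hL.iterated_deriv n).differentiableAt

lemma iteratedDeriv_mobiusPullback (n : ℕ) {z : ℂ} (hz : z ≠ 1)
    (hL : AnalyticAt ℂ L (1 - z)⁻¹) :
    iteratedDeriv (n + 1) (mobiusPullback L) z =
      (1 - z)⁻¹ ^ (n + 2) * iteratedDeriv (n + 1) (fun s ↦ s ^ n * L s) (1 - z)⁻¹ := by
  have hmob := hasDerivAt_inv_one_sub hz
  induction n generalizing z with
  | zero =>
    simp only [zero_add, iteratedDeriv_one, pow_zero, one_mul]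
    exact (hL.differentiableAt.hasDerivAt.comp z hmob).deriv.trans (mul_comm _ _)
  | succ n ih =>
    have hpow : AnalyticAt ℂ (fun s ↦ s ^ n * L s) (1 - z)⁻¹ := by fun_prop
    have hnear : iteratedDeriv (n + 1) (mobiusPullback L) =ᶠ[𝓝 z] fun w ↦ (1 - w)⁻¹ ^ (n + 2) *
        iteratedDeriv (n + 1) (fun s ↦ s ^ n * L s) (1 - w)⁻¹ := by
      filter_upwards [eventually_ne_nhds hz,
        hmob.continuousAt.eventually hL.eventually_analyticAt] with w hw hLw
      exact ih hw hLw (hasDerivAt_inv_one_sub hw)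
    have hderiv := (differentiableAt_iteratedDeriv hpow (n + 1)).hasDerivAt.comp z hmob
    rw [iteratedDeriv_succ, hnear.deriv_eq]
    refine ((hmob.fun_pow (n + 2)).mul hderiv).deriv.trans ?_
    simp only [pow_succ' _ n, mul_assoc, iteratedDeriv_id_mul hpow, ← iteratedDeriv_succ,
      Function.comp_apply]
    push_cast
    ring

lemma analyticAt_mobiusPullback (hf : Differentiable ℂ f) {z : ℂ} (hz : z ≠ 1) :
    AnalyticAt ℂ (mobiusPullback f) z :=
  (hf.analyticAt _).fun_comp <|
    (analyticAt_const.sub analyticAt_id).inv (sub_ne_zero.mpr hz.symm)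

lemma mobiusPullback_zero : mobiusPullback f 0 = f 1 := by simp [mobiusPullback]

lemma liCoeffOf_succ_eq (hf : Differentiable ℂ f) (h1 : f 1 = 1) (n : ℕ) :
    liCoeffOf f (n + 1) =
      1 / (n.factorial : ℂ) * iteratedDeriv n (logDeriv (mobiusPullback f)) 0 := by
  have hslit : mobiusPullback f 0 ∈ slitPlane := by simp [mobiusPullback_zero, h1]
  have hlog : AnalyticAt ℂ (fun s ↦ log (f s)) (1 - 0)⁻¹ :=
    (hf.analyticAt _).clog hslit
  have hmob := iteratedDeriv_mobiusPullback n zero_ne_one hlog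
  rw [sub_zero, inv_one, one_pow, one_mul] at hmob
  rw [liCoeffOf, Nat.add_sub_cancel, ← hmob, iteratedDeriv_succ']
  congr 1
  apply EventuallyEq.iteratedDeriv_eq
  have han : AnalyticAt ℂ (mobiusPullback f) 0 := analyticAt_mobiusPullback hf zero_ne_one
  filter_upwards [han.eventually_analyticAt,
    han.continuousAt.eventually (isOpen_slitPlane.mem_nhds hslit)] with z hz hzslit
  exact (hz.differentiableAt.hasDerivAt.clog hzslit).deriv

lemma logDeriv_mobiusPullback (hf : Differentiable ℂ f) {z : ℂ} (hz : z ≠ 1) :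
    logDeriv (mobiusPullback f) z = (1 - z)⁻¹ ^ 2 * logDeriv f (1 - z)⁻¹ := by
  have hmob := hasDerivAt_inv_one_sub hz
  exact (logDeriv_comp (hf _) hmob.differentiableAt).trans (by rw [hmob.deriv, mul_comm])

lemma iteratedDeriv_inv_const_sub (n : ℕ) (c : ℂ) :
    iteratedDeriv n (fun z ↦ (c - z)⁻¹) 0 = n.factorial * c⁻¹ ^ (n + 1) := by
  have hsign : (-1 : ℂ) ^ n * (-1) ^ n = 1 := by rw [← mul_pow]; simp
  have hexp : (-1 - n : ℤ) = -((n + 1 : ℕ) : ℤ) := by push_cast; ring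
  rw [iteratedDeriv_comp_const_sub, iteratedDeriv_eq_iterate]
  simp only [iter_deriv_inv', sub_zero, smul_eq_mul]
  rw [hexp, zpow_neg, zpow_natCast, inv_pow, ← mul_assoc, ← mul_assoc, hsign, one_mul]

lemma inv_one_sub_sq_div_sub {ρ z : ℂ} (hρ : ρ ≠ 0) (hz : z ≠ 1) (hzρ : (1 - z)⁻¹ ≠ ρ) :
    (1 - z)⁻¹ ^ 2 / ((1 - z)⁻¹ - ρ) = (1 - z)⁻¹ - (1 - ρ⁻¹ - z)⁻¹ := by
  have hz' : 1 - z ≠ 0 := sub_ne_zero.mpr hz.symm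
  obtain ⟨d, hd⟩ : ∃ d, d = 1 - ρ * (1 - z) := ⟨_, rfl⟩
  have hd0 : d ≠ 0 := fun h ↦ hzρ (by field_simp; linear_combination h - hd)
  have h₁ : (1 - z)⁻¹ - ρ = d * (1 - z)⁻¹ := by rw [hd]; field_simp
  have h₂ : 1 - ρ⁻¹ - z = -d * ρ⁻¹ := by rw [hd]; field_simp; ring
  rw [h₁, h₂]
  field_simp
  linear_combination -hd

end MobiusPullback

section Li

/-- The contribution of the zeros `ρ ∈ zerosIn f R` to the logarithmic derivative of
`mobiusPullback f`. The point `1 - ρ⁻¹` is the zero of `mobiusPullback f` corresponding to `ρ`, and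
`(1 - z)⁻¹` comes from the pole of `(1 - z)⁻¹ - ρ` at `z = 1`. -/
noncomputable def mobiusZeroSum (f : ℂ → ℂ) (R : ℝ) (z : ℂ) : ℂ :=
  ∑ ρ ∈ zerosIn f R, analyticOrderNatAt f ρ * ((1 - z)⁻¹ - (1 - ρ⁻¹ - z)⁻¹)

namespace XiLike

variable {f : ℂ → ℂ}

lemma ne_zero_of_zero (hf : XiLike f) {ρ : ℂ} (hρ : f ρ = 0) : ρ ≠ 0 := by
  rintro rfl
  have := hf.one_sub 1
  simp [hρ, hf.map_one] at this

lemma ne_one_of_zero (hf : XiLike f) {ρ : ℂ} (hρ : f ρ = 0) : ρ ≠ 1 := by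
  rintro rfl
  exact hf.map_one_ne_zero hρ

lemma one_sub_inv_sub_ne_zero {ρ z : ℂ} (hρ : f ρ = 0) (hfz : mobiusPullback f z ≠ 0) :
    1 - ρ⁻¹ - z ≠ 0 := fun h ↦
  hfz <| by rw [mobiusPullback, show 1 - z = ρ⁻¹ by linear_combination h, inv_inv, hρ]

lemma inv_one_sub_inv (hf : XiLike f) {ρ : ℂ} (hρ : f ρ = 0) :
    (1 - ρ⁻¹)⁻¹ = 1 - (1 - ρ)⁻¹ := by
  have h₀ := hf.ne_zero_of_zero hρ
  have h₁ := sub_ne_zero.mpr (hf.ne_one_of_zero hρ)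
  have h₁' := sub_ne_zero.mpr (hf.ne_one_of_zero hρ).symm
  have h : 1 - ρ⁻¹ = (ρ - 1) / ρ := by field_simp
  rw [h]
  field_simp
  ring

lemma eventually_norm_logDeriv_mobiusPullback_sub_le (hf : XiLike f) {ε : ℝ} (hε : 0 < ε) :
    ∀ᶠ R : ℝ in atTop, ∀ z, ‖z‖ ≤ 1 / 2 → mobiusPullback f z ≠ 0 →
      ‖logDeriv (mobiusPullback f) z - mobiusZeroSum f R z‖ ≤ ε := by
  filter_upwards [hf.eventually_norm_logDeriv_sub_sum_le (show 0 < ε / 6 by positivity),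
    eventually_ge_atTop 8] with R herr hR z hz hfz
  have hz1 : z ≠ 1 := by rintro rfl; norm_num at hz
  have hz1' : 1 - z ≠ 0 := sub_ne_zero.mpr hz1.symm
  have hinv : ‖(1 - z)⁻¹‖ ≤ 2 := by
    have := norm_sub_norm_le 1 z
    rw [norm_one] at this
    rw [norm_inv]
    exact inv_le_of_inv_le₀ two_pos (by linarith)
  have hdist : ‖(1 - z)⁻¹ - 1‖ ≤ 1 := by
    have : (1 - z)⁻¹ - 1 = (1 - z)⁻¹ * z := by field_simp; ring
    rw [this, norm_mul]
    nlinarith [norm_nonneg z]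
  have hsum : mobiusZeroSum f R z =
      (1 - z)⁻¹ ^ 2 * ∑ ρ ∈ zerosIn f R, analyticOrderNatAt f ρ / ((1 - z)⁻¹ - ρ) := by
    rw [mobiusZeroSum, Finset.mul_sum]
    refine Finset.sum_congr rfl fun ρ hρ ↦ ?_
    have hfρ := (hf.mem_zerosIn_iff.mp hρ).1
    have hzρ : (1 - z)⁻¹ ≠ ρ := by
      rintro rfl
      exact hfz hfρ
    rw [← inv_one_sub_sq_div_sub (hf.ne_zero_of_zero hfρ) hz1 hzρ]
    ring
  rw [logDeriv_mobiusPullback hf.differentiable hz1, hsum, ← mul_sub, norm_mul, norm_pow]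
  calc ‖(1 - z)⁻¹‖ ^ 2 * ‖_‖ ≤ 2 ^ 2 * (ε / 6 * (‖(1 - z)⁻¹ - 1‖ + 1 / 2)) := by
        gcongr
        exact herr _ hfz (by linarith)
    _ ≤ 2 ^ 2 * (ε / 6 * (1 + 1 / 2)) := by gcongr
    _ = ε := by ring

lemma analyticAt_logDeriv_mobiusPullback (hf : XiLike f) {z : ℂ} (hz : z ≠ 1)
    (hfz : mobiusPullback f z ≠ 0) : AnalyticAt ℂ (logDeriv (mobiusPullback f)) z :=
  have h := analyticAt_mobiusPullback hf.differentiable hz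
  h.deriv.div h hfz

lemma analyticAt_mobiusZeroSum_term (hf : XiLike f) {R : ℝ} {ρ z : ℂ} (hρ : ρ ∈ zerosIn f R)
    (hz : z ≠ 1) (hfz : mobiusPullback f z ≠ 0) :
    AnalyticAt ℂ (fun z ↦ analyticOrderNatAt f ρ * ((1 - z)⁻¹ - (1 - ρ⁻¹ - z)⁻¹)) z := by
  have h₁ : 1 - z ≠ 0 := sub_ne_zero.mpr hz.symm
  have h₂ := one_sub_inv_sub_ne_zero (hf.mem_zerosIn_iff.mp hρ).1 hfz
  fun_prop (disch := assumption)

lemma analyticAt_mobiusZeroSum (hf : XiLike f) (R : ℝ) {z : ℂ} (hz : z ≠ 1)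
    (hfz : mobiusPullback f z ≠ 0) : AnalyticAt ℂ (mobiusZeroSum f R) z :=
  Finset.analyticAt_fun_sum _ fun _ hρ ↦ hf.analyticAt_mobiusZeroSum_term hρ hz hfz

lemma mobiusPullback_zero_ne_zero (hf : XiLike f) : mobiusPullback f 0 ≠ 0 := by
  simp [mobiusPullback_zero, hf.map_one]

lemma iteratedDeriv_mobiusZeroSum (hf : XiLike f) (R : ℝ) (n : ℕ) :
    iteratedDeriv n (mobiusZeroSum f R) 0 =
      n.factorial * ∑ ρ ∈ zerosIn f R, analyticOrderNatAt f ρ * (1 - (1 - ρ⁻¹) ^ (n + 1)) := by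
  have hsymm : ∑ ρ ∈ zerosIn f R, analyticOrderNatAt f ρ * (1 - (1 - ρ⁻¹) ^ (n + 1)) =
      ∑ ρ ∈ zerosIn f R, analyticOrderNatAt f ρ * (1 - (1 - ρ⁻¹)⁻¹ ^ (n + 1)) := by
    refine Finset.sum_nbij' (1 - ·) (1 - ·) (fun ρ ↦ hf.one_sub_mem_zerosIn)
      (fun ρ ↦ hf.one_sub_mem_zerosIn) (by simp) (by simp) fun ρ hρ ↦ ?_
    have hρ' := (hf.mem_zerosIn_iff.mp (hf.one_sub_mem_zerosIn hρ)).1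
    rw [hf.inv_one_sub_inv hρ', sub_sub_cancel, analyticOrderNatAt_one_sub hf.one_sub]
  have hφ := hf.mobiusPullback_zero_ne_zero
  rw [hsymm, Finset.mul_sum]
  refine (iteratedDeriv_fun_sum fun ρ hρ ↦
    (hf.analyticAt_mobiusZeroSum_term hρ zero_ne_one hφ).contDiffAt).trans ?_
  refine Finset.sum_congr rfl fun ρ hρ ↦ ?_
  have h₂ := one_sub_inv_sub_ne_zero (hf.mem_zerosIn_iff.mp hρ).1 hφ
  rw [iteratedDeriv_const_mul_field, iteratedDeriv_fun_sub, iteratedDeriv_inv_const_sub,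
    iteratedDeriv_inv_const_sub]
  · simp
    ring
  · fun_prop (disch := simp)
  · fun_prop (disch := assumption)

lemma exists_closedBall_mobiusPullback_ne_zero (hf : XiLike f) :
    ∃ δ > 0, ∀ z ∈ closedBall (0 : ℂ) δ, mobiusPullback f z ≠ 0 ∧ ‖z‖ ≤ 1 / 2 := by
  have hcont := (analyticAt_mobiusPullback hf.differentiable zero_ne_one).continuousAt
  refine nhds_basis_closedBall.eventually_iff.mp
    ((hcont.eventually_ne hf.mobiusPullback_zero_ne_zero).and ?_)
  filter_upwards [closedBall_mem_nhds (0 : ℂ) one_half_pos] with z hz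
    using mem_closedBall_zero_iff.mp hz

/-- The formula of Bombieri and Lagarias. The sum over zeros only converges conditionally, which is
why it is taken over discs symmetric under `s ↦ 1 - s`. -/
lemma tendsto_sum_liCoeffOf (hf : XiLike f) {n : ℕ} (hn : 1 ≤ n) :
    Tendsto (fun R ↦ ∑ ρ ∈ zerosIn f R, analyticOrderNatAt f ρ * (1 - (1 - ρ⁻¹) ^ n))
      atTop (𝓝 (liCoeffOf f n)) := by
  obtain ⟨n, rfl⟩ := Nat.exists_eq_add_of_le' hn
  have hφ := hf.mobiusPullback_zero_ne_zero
  obtain ⟨δ, hδ, hball⟩ := hf.exists_closedBall_mobiusPullback_ne_zero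
  refine Metric.tendsto_nhds.mpr fun ε hε ↦ ?_
  filter_upwards [hf.eventually_norm_logDeriv_mobiusPullback_sub_le
    (show 0 < ε / 2 * δ ^ n by positivity)] with R hR
  have hdiff : DifferentiableOn ℂ (logDeriv (mobiusPullback f) - mobiusZeroSum f R)
      (closedBall 0 δ) := fun z hz ↦ by
    obtain ⟨hfz, hz2⟩ := hball z hz
    have hz1 : z ≠ 1 := by rintro rfl; norm_num at hz2
    exact ((hf.analyticAt_logDeriv_mobiusPullback hz1 hfz).sub
      (hf.analyticAt_mobiusZeroSum R hz1 hfz)).differentiableWithinAt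
  have hcauchy := norm_iteratedDeriv_le_of_forall_mem_sphere_norm_le n hδ
    (hdiff.diffContOnCl_ball subset_rfl) fun z hz ↦
      have ⟨hfz, hz2⟩ := hball z (sphere_subset_closedBall hz)
      hR z hz2 hfz
  rw [iteratedDeriv_sub (hf.analyticAt_logDeriv_mobiusPullback zero_ne_one hφ).contDiffAt
    (hf.analyticAt_mobiusZeroSum R zero_ne_one hφ).contDiffAt,
    hf.iteratedDeriv_mobiusZeroSum] at hcauchy
  have hfac : (n.factorial : ℂ) ≠ 0 := mod_cast n.factorial_ne_zero
  have hpos : (0 : ℝ) < n.factorial := mod_cast n.factorial_pos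
  rw [dist_eq_norm_sub', liCoeffOf_succ_eq hf.differentiable hf.map_one]
  refine lt_of_mul_lt_mul_left ?_ (norm_nonneg (n.factorial : ℂ))
  rw [← norm_mul, mul_sub, ← mul_assoc, mul_one_div_cancel hfac, one_mul]
  refine hcauchy.trans_lt ?_
  rw [norm_natCast]
  field_simp
  norm_num

end XiLike

end Li

section Positivity

variable {f : ℂ → ℂ}

lemma norm_one_sub_inv_sq {ρ : ℂ} (hρ : ρ ≠ 0) :
    ‖1 - ρ⁻¹‖ ^ 2 = 1 - (2 * ρ.re - 1) / ‖ρ‖ ^ 2 := by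
  have hsq : ‖ρ - 1‖ ^ 2 = ‖ρ‖ ^ 2 - (2 * ρ.re - 1) := by
    simp only [← normSq_eq_norm_sq, normSq_apply, sub_re, sub_im, one_re, one_im]
    ring
  have hdiv : 1 - ρ⁻¹ = (ρ - 1) / ρ := by field_simp
  have hnorm : ‖ρ‖ ≠ 0 := norm_ne_zero_iff.mpr hρ
  rw [hdiv, norm_div, div_pow, hsq, sub_div, div_self (pow_ne_zero 2 hnorm)]

lemma norm_one_sub_inv_eq_one {ρ : ℂ} (hρ : ρ.re = 1 / 2) : ‖1 - ρ⁻¹‖ = 1 := by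
  have hρ0 : ρ ≠ 0 := by rintro rfl; norm_num at hρ
  rw [← sq_eq_sq₀ (norm_nonneg _) zero_le_one, norm_one_sub_inv_sq hρ0, hρ]
  norm_num

lemma norm_one_sub_inv_lt_one {ρ : ℂ} (hρ : 1 / 2 < ρ.re) : ‖1 - ρ⁻¹‖ < 1 := by
  have hρ0 : ρ ≠ 0 := by rintro rfl; norm_num at hρ
  rw [← sq_lt_one_iff₀ (norm_nonneg _), norm_one_sub_inv_sq hρ0, sub_lt_self_iff]
  have : 0 < 2 * ρ.re - 1 := by linarith
  positivity

lemma re_lt_one_of_norm_eq_one {u : ℂ} (hu : ‖u‖ = 1) (hu1 : u ≠ 1) : u.re < 1 := by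
  refine (hu ▸ re_le_norm u).lt_of_ne fun hre ↦ hu1 ?_
  have him := normSq_eq_norm_sq u
  rw [hu, normSq_apply, hre] at him
  exact Complex.ext hre (by simpa using him)

lemma exists_zero_one_sub_inv_pow_ne_one (hinf : {ρ | f ρ = 0}.Infinite) {n : ℕ} (hn : 1 ≤ n) :
    ∃ ρ, f ρ = 0 ∧ (1 - ρ⁻¹) ^ n ≠ 1 := by
  have hroots : {u : ℂ | u ^ n = 1}.Finite :=
    (Polynomial.nthRootsFinset n (1 : ℂ)).finite_toSet.subset fun u hu ↦
      (Polynomial.mem_nthRootsFinset hn 1).mpr hu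
  have hinj : Function.Injective fun ρ : ℂ ↦ 1 - ρ⁻¹ := sub_right_injective.comp inv_injective
  obtain ⟨ρ, hρ, hρn⟩ := hinf.exists_notMem_finite (hroots.preimage hinj.injOn)
  exact ⟨ρ, hρ, hρn⟩

theorem XiLike.liCoeffOf_re_pos (hf : XiLike f) (hinf : {ρ | f ρ = 0}.Infinite)
    (hline : ∀ ρ, f ρ = 0 → ρ.re = 1 / 2) {n : ℕ} (hn : 1 ≤ n) : 0 < (liCoeffOf f n).re := by
  let summand (ρ : ℂ) : ℝ := (analyticOrderNatAt f ρ * (1 - (1 - ρ⁻¹) ^ n) : ℂ).re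
  have hsummand (ρ : ℂ) : summand ρ = analyticOrderNatAt f ρ * (1 - ((1 - ρ⁻¹) ^ n).re) := by
    simp only [summand, ← ofReal_natCast, re_ofReal_mul, sub_re, one_re]
  have hunit {ρ : ℂ} (hρ : f ρ = 0) : ‖(1 - ρ⁻¹) ^ n‖ = 1 := by
    rw [norm_pow, norm_one_sub_inv_eq_one (hline ρ hρ), one_pow]
  have hnonneg {ρ : ℂ} (hρ : f ρ = 0) : 0 ≤ summand ρ := by
    rw [hsummand]
    exact mul_nonneg (Nat.cast_nonneg _) (sub_nonneg.mpr (hunit hρ ▸ re_le_norm _))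
  obtain ⟨ρ₀, hρ₀, hne⟩ := exists_zero_one_sub_inv_pow_ne_one hinf hn
  have horder : 0 < analyticOrderNatAt f ρ₀ := by
    have htop := analyticOrderAt_ne_top_of_differentiable hf.differentiable hf.map_one_ne_zero ρ₀
    rw [Nat.pos_iff_ne_zero, Ne, analyticOrderNatAt, ENat.toNat_eq_zero, not_or]
    exact ⟨(hf.differentiable.analyticAt ρ₀).analyticOrderAt_ne_zero.mpr hρ₀, htop⟩
  have hpos : 0 < summand ρ₀ := by
    rw [hsummand]
    exact mul_pos (mod_cast horder) (sub_pos.mpr (re_lt_one_of_norm_eq_one (hunit hρ₀) hne))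
  refine hpos.trans_le (ge_of_tendsto
    ((continuous_re.tendsto _).comp (hf.tendsto_sum_liCoeffOf hn)) ?_)
  filter_upwards [eventually_ge_atTop ‖ρ₀ - 1 / 2‖] with R hR
  rw [Function.comp_apply, re_sum]
  exact Finset.single_le_sum (f := summand) (fun ρ hρ ↦ hnonneg (hf.mem_zerosIn_iff.mp hρ).1)
    (hf.mem_zerosIn_iff.mpr ⟨hρ₀, hR⟩)

end Positivity

section ZeroFree

variable {f : ℂ → ℂ} {r : ℝ}

open scoped ComplexConjugate

lemma norm_add_conj_le_two_mul_re (hf : DifferentiableOn ℂ f (ball 0 r))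
    (hcoeff : ∀ n, 0 ≤ (iteratedDeriv n f 0).re) {z : ℂ} (hz : ‖z‖ < r) :
    ‖f z + conj (f (conj z))‖ ≤ 2 * (f ‖z‖).re := by
  let a (n : ℕ) : ℂ := (n.factorial : ℂ)⁻¹ * iteratedDeriv n f 0
  have ha : ∀ n, 0 ≤ (a n).re := fun n ↦ by
    simp only [a, ← ofReal_natCast, ← ofReal_inv, re_ofReal_mul]
    exact mul_nonneg (by positivity) (hcoeff n)
  have hsum : ∀ w : ℂ, ‖w‖ < r → HasSum (fun n ↦ a n * w ^ n) (f w) := fun w hw ↦ by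
    refine (hasSum_taylorSeries_on_ball hf (mem_ball_zero_iff.mpr hw)).congr_fun fun n ↦ ?_
    simp only [a, smul_eq_mul, sub_zero]
    ring
  have hconj := hasSum_conj'.mpr (hsum (conj z) (by rwa [norm_conj]))
  have hnorm := (hasSum_re (hsum ‖z‖ (by rwa [norm_real, norm_norm]))).mul_left 2
  have hle := tsum_of_norm_bounded hnorm (f := fun n ↦ a n * z ^ n + conj (a n * conj z ^ n))
    fun n ↦ by
      rw [map_mul, map_pow, conj_conj, ← add_mul, add_conj, norm_mul, norm_real, norm_pow,
        Real.norm_of_nonneg (by linarith [ha n]), ← ofReal_pow, re_mul_ofReal, mul_assoc]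
  rwa [((hsum z hz).add hconj).tsum_eq] at hle

lemma norm_pow_four_le_norm_mul_norm_conj (hr : 0 < r) (hf : DifferentiableOn ℂ f (ball 0 r))
    (hne : ∀ z ∈ ball 0 r, f z ≠ 0) (hcoeff : ∀ n, 0 ≤ (iteratedDeriv n (logDeriv f) 0).re)
    {z : ℂ} (hz : ‖z‖ < r) :
    ‖f 0‖ ^ 4 ≤ ‖f z‖ * ‖f (conj z)‖ * ‖f ‖z‖‖ ^ 2 := by
  obtain ⟨L, hL0, hL, hexp⟩ := exists_eq_exp_on_ball hr hf hne
  have hLcoeff : ∀ n, 0 ≤ (iteratedDeriv n L 0).re := fun n ↦ by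
    cases n with
    | zero => simp [hL0]
    | succ n =>
      have hL' : deriv L =ᶠ[𝓝 0] logDeriv f := by
        filter_upwards [ball_mem_nhds 0 hr] with w hw using (hL w hw).deriv
      rw [iteratedDeriv_succ', hL'.iteratedDeriv_eq]
      exact hcoeff n
  have hnorm : ∀ w : ℂ, ‖w‖ < r → ‖f w‖ = ‖f 0‖ * Real.exp (L w).re := fun w hw ↦ by
    rw [hexp w (mem_ball_zero_iff.mpr hw), norm_mul, norm_exp]
  have hre : 0 ≤ (L z).re + (L (conj z)).re + 2 * (L ‖z‖).re := by
    have h := (abs_re_le_norm _).trans (norm_add_conj_le_two_mul_re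
      (fun w hw ↦ (hL w hw).differentiableAt.differentiableWithinAt) hLcoeff hz)
    rw [add_re, conj_re] at h
    linarith [(abs_le.mp h).1]
  rw [hnorm z hz, hnorm (conj z) (by rwa [norm_conj]),
    hnorm ‖z‖ (by rwa [norm_real, norm_norm])]
  calc ‖f 0‖ ^ 4 ≤ ‖f 0‖ ^ 4 * Real.exp ((L z).re + (L (conj z)).re + 2 * (L ‖z‖).re) :=
        le_mul_of_one_le_right (by positivity) (Real.one_le_exp hre)
    _ = _ := by rw [Real.exp_add, Real.exp_add, two_mul, Real.exp_add]; ring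

lemma exists_zero_of_minimal_norm (hf : ContinuousOn f (ball 0 r)) {z : ℂ} (hz : ‖z‖ < r)
    (hfz : f z = 0) : ∃ w, ‖w‖ < r ∧ f w = 0 ∧ ∀ u, f u = 0 → ‖w‖ ≤ ‖u‖ := by
  have hsub : closedBall (0 : ℂ) ‖z‖ ⊆ ball 0 r := closedBall_subset_ball hz
  have hcompact : IsCompact (closedBall 0 ‖z‖ ∩ f ⁻¹' {0}) :=
    (isCompact_closedBall _ _).of_isClosed_subset
      ((hf.mono hsub).preimage_isClosed_of_isClosed isClosed_closedBall isClosed_singleton)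
      Set.inter_subset_left
  obtain ⟨w, ⟨hwz, hfw⟩, hmin⟩ :=
    hcompact.exists_isMinOn ⟨z, by simp, hfz⟩ continuous_norm.continuousOn
  rw [mem_closedBall_zero_iff] at hwz
  refine ⟨w, hwz.trans_lt hz, hfw, fun u hu ↦ ?_⟩
  rcases le_total ‖u‖ ‖z‖ with huz | hzu
  · exact hmin ⟨mem_closedBall_zero_iff.mpr huz, hu⟩
  · exact hwz.trans hzu

/-- The inequality `norm_pow_four_le_norm_mul_norm_conj` holds up to the modulus of the smallest
zero of `f` and, by continuity, at that zero. -/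
theorem ne_zero_of_iteratedDeriv_logDeriv_re_nonneg (hf : DifferentiableOn ℂ f (ball 0 r))
    (hf0 : f 0 ≠ 0) (hcoeff : ∀ n, 0 ≤ (iteratedDeriv n (logDeriv f) 0).re) {z : ℂ}
    (hz : ‖z‖ < r) : f z ≠ 0 := fun hfz ↦ by
  obtain ⟨w, hwr, hfw, hmin⟩ := exists_zero_of_minimal_norm hf.continuousOn hz hfz
  have hw : 0 < ‖w‖ := norm_pos_iff.mpr fun h ↦ hf0 (h ▸ hfw)
  have hne : ∀ u ∈ ball (0 : ℂ) ‖w‖, f u ≠ 0 := fun u hu hfu ↦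
    (mem_ball_zero_iff.mp hu).not_ge (hmin u hfu)
  have hcont {u : ℂ} (hu : ‖u‖ < r) : ContinuousAt f u :=
    hf.continuousOn.continuousAt (isOpen_ball.mem_nhds (mem_ball_zero_iff.mpr hu))
  have h₁ := hcont hwr
  have h₂ : ContinuousAt (fun u ↦ f (conj u)) w :=
    (hcont (by rwa [norm_conj])).comp continuous_conj.continuousAt
  have h₃ : ContinuousAt (fun u : ℂ ↦ f ‖u‖) w :=
    (hcont (by rwa [norm_real, norm_norm])).comp (by fun_prop)
  have hlim := ContinuousWithinAt.closure_le (f := fun _ ↦ ‖f 0‖ ^ 4)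
    (by rw [closure_ball 0 hw.ne', mem_closedBall_zero_iff] : w ∈ closure (ball 0 ‖w‖))
    continuousWithinAt_const ((h₁.norm.mul h₂.norm).mul (h₃.norm.pow 2)).continuousWithinAt
    fun u hu ↦ norm_pow_four_le_norm_mul_norm_conj hw
      (hf.mono (ball_subset_ball hwr.le)) hne hcoeff (mem_ball_zero_iff.mp hu)
  simp only [Pi.mul_apply, hfw, norm_zero, zero_mul] at hlim
  exact hlim.not_gt (by positivity)

theorem re_le_one_half_of_liCoeffOf_re_nonneg (hf : Differentiable ℂ f) (h1 : f 1 = 1)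
    (hpos : ∀ n, 1 ≤ n → 0 ≤ (liCoeffOf f n).re) {ρ : ℂ} (hρ : f ρ = 0) : ρ.re ≤ 1 / 2 := by
  by_contra! hre
  have hdiff : DifferentiableOn ℂ (mobiusPullback f) (ball 0 1) := fun z hz ↦ by
    have hz1 : z ≠ 1 := by rintro rfl; simp at hz
    exact (analyticAt_mobiusPullback hf hz1).differentiableWithinAt
  have h0 : mobiusPullback f 0 ≠ 0 := by simp [mobiusPullback_zero, h1]
  have hcoeff : ∀ n, 0 ≤ (iteratedDeriv n (logDeriv (mobiusPullback f)) 0).re := fun n ↦ by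
    have h := hpos (n + 1) n.succ_pos
    rw [liCoeffOf_succ_eq hf h1, one_div, ← ofReal_natCast, ← ofReal_inv, re_ofReal_mul] at h
    exact nonneg_of_mul_nonneg_right h (by positivity)
  refine ne_zero_of_iteratedDeriv_logDeriv_re_nonneg hdiff h0 hcoeff
    (norm_one_sub_inv_lt_one hre) ?_
  rw [mobiusPullback, sub_sub_cancel, inv_inv, hρ]

theorem li_criterion_general (hf : XiLike f) (hinf : {ρ | f ρ = 0}.Infinite) :
    (∀ ρ, f ρ = 0 → ρ.re = 1 / 2) ↔ ∀ n, 1 ≤ n → 0 < (liCoeffOf f n).re := by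
  refine ⟨fun hline _ ↦ hf.liCoeffOf_re_pos hinf hline, fun hpos ρ hρ ↦ ?_⟩
  have hle {ρ : ℂ} (hρ : f ρ = 0) : ρ.re ≤ 1 / 2 :=
    re_le_one_half_of_liCoeffOf_re_nonneg hf.differentiable hf.map_one
      (fun n hn ↦ (hpos n hn).le) hρ
  have hsymm := hle ((hf.one_sub ρ).trans hρ)
  rw [sub_re, one_re] at hsymm
  linarith [hle hρ]

end ZeroFree

section MellinGrowth

open MeasureTheory

lemma exists_mul_log_le {ε p : ℝ} (hε : 0 < ε) (hp : 0 < p) :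
    ∃ C, ∀ t, 1 ≤ t → ∀ x, x * Real.log t ≤ ε * x ^ 2 + C + p * t := by
  have hlog := (Real.isLittleO_pow_log_id_atTop (n := 2)).bound (show 0 < 4 * ε * p by positivity)
  obtain ⟨T, hT⟩ := eventually_atTop.mp hlog
  refine ⟨Real.log (max T 1) ^ 2 / (4 * ε), fun t ht x ↦ ?_⟩
  have hsq : Real.log t ^ 2 ≤ Real.log (max T 1) ^ 2 + 4 * ε * p * t := by
    rcases le_total T t with hTt | htT
    · have h := hT t hTt
      rw [Real.norm_of_nonneg (by positivity), id, Real.norm_of_nonneg (by positivity)] at h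
      linarith [sq_nonneg (Real.log (max T 1))]
    · have h : Real.log t ≤ Real.log (max T 1) :=
        Real.log_le_log (by positivity) (htT.trans (le_max_left _ _))
      have := pow_le_pow_left₀ (Real.log_nonneg ht) h 2
      have : 0 ≤ 4 * ε * p * t := by positivity
      linarith
  calc x * Real.log t ≤ ε * x ^ 2 + Real.log t ^ 2 / (4 * ε) := by
        have h := sq_nonneg (2 * ε * x - Real.log t)
        field_simp
        linarith
    _ ≤ ε * x ^ 2 + (Real.log (max T 1) ^ 2 + 4 * ε * p * t) / (4 * ε) := by gcongr
    _ = ε * x ^ 2 + Real.log (max T 1) ^ 2 / (4 * ε) + p * t := by field_simp; ring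

lemma norm_mellin_integrand_le {g : ℝ → ℂ} {ε p C t : ℝ} {s : ℂ} (ht : 0 < t) (hs : 0 ≤ s.re)
    (hC : 1 ≤ t → s.re * Real.log t ≤ ε * s.re ^ 2 + C + p * t) :
    ‖(t : ℂ) ^ (s - 1) • g t‖ ≤ ‖(t : ℂ) ^ (0 - 1 : ℂ) • g t‖ +
      Real.exp (ε * s.re ^ 2 + C) * (Set.Ioi 1).indicator (fun t ↦ Real.exp (p * t) * ‖g t‖) t := by
  have hsplit : t ^ (s.re - 1) = t ^ s.re * t⁻¹ := by
    rw [Real.rpow_sub_one ht.ne', div_eq_mul_inv]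
  simp only [norm_smul, norm_cpow_eq_rpow_re_of_pos ht, sub_re, zero_re, one_re, hsplit]
  rw [zero_sub, Real.rpow_neg_one]
  rcases le_or_gt t 1 with ht1 | ht1
  · rw [Set.indicator_of_notMem (by simpa using ht1), mul_zero, add_zero]
    gcongr
    exact mul_le_of_le_one_left (by positivity) (Real.rpow_le_one ht.le ht1 hs)
  · rw [Set.indicator_of_mem (Set.mem_Ioi.mpr ht1), ← mul_assoc, ← Real.exp_add]
    refine le_add_of_nonneg_of_le (by positivity) ?_
    gcongr
    refine (mul_le_of_le_one_right (by positivity) (inv_le_one_of_one_le₀ ht1.le)).trans ?_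
    rw [Real.rpow_def_of_pos ht, mul_comm]
    exact Real.exp_le_exp.mpr (hC ht1.le)

lemma exists_norm_mellin_le {g : ℝ → ℂ} {p : ℝ} (hp : 0 < p) (hg : MellinConvergent g 0)
    (hexp : IntegrableOn (fun t ↦ Real.exp (p * t) * ‖g t‖) (Set.Ioi 1)) {ε : ℝ} (hε : 0 < ε) :
    ∃ C, ∀ s : ℂ, 0 ≤ s.re → ‖mellin g s‖ ≤ C * Real.exp (ε * s.re ^ 2) := by
  obtain ⟨C, hC⟩ := exists_mul_log_le hε hp
  set A := ∫ t in Set.Ioi (0 : ℝ), ‖(t : ℂ) ^ (0 - 1 : ℂ) • g t‖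
  set B := ∫ t in Set.Ioi (0 : ℝ),
    (Set.Ioi 1).indicator (fun t ↦ Real.exp (p * t) * ‖g t‖) t
  have hA : 0 ≤ A := integral_nonneg fun t ↦ norm_nonneg _
  have hind : IntegrableOn ((Set.Ioi 1).indicator fun t ↦ Real.exp (p * t) * ‖g t‖)
      (Set.Ioi (0 : ℝ)) :=
    ((integrable_indicator_iff measurableSet_Ioi).mpr hexp).integrableOn
  refine ⟨A + Real.exp C * B, fun s hs ↦ ?_⟩
  have hone : 1 ≤ Real.exp (ε * s.re ^ 2) := Real.one_le_exp (by positivity)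
  calc ‖mellin g s‖ ≤ A + Real.exp (ε * s.re ^ 2 + C) * B := by
        rw [← integral_const_mul, ← integral_add hg.norm (hind.const_mul _)]
        refine norm_integral_le_of_norm_le (hg.norm.add (hind.const_mul _)) ?_
        filter_upwards [ae_restrict_mem measurableSet_Ioi] with t ht
        exact norm_mellin_integrand_le ht hs fun ht1 ↦ hC t ht1 s.re
    _ ≤ (A + Real.exp C * B) * Real.exp (ε * s.re ^ 2) := by
        rw [Real.exp_add]
        linarith [le_mul_of_one_le_right hA hone]

end MellinGrowth

section RiemannXi

open HurwitzZeta

lemma exists_integrableOn_exp_mul_f_modif : ∃ p > 0, MeasureTheory.IntegrableOn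
    (fun t ↦ Real.exp (p * t) * ‖(hurwitzEvenFEPair 0).f_modif t‖) (Set.Ioi 1) := by
  obtain ⟨q, hq, hO⟩ := isBigO_atTop_evenKernel_sub 0
  refine ⟨q / 2, by positivity, ?_⟩
  have hcont : ContinuousOn (fun t ↦ Real.exp (q / 2 * t) * ‖evenKernel 0 t - 1‖) (Set.Ici 1) := by
    have h := (continuousOn_evenKernel 0).mono (Set.Ici_subset_Ioi.mpr one_pos)
    fun_prop
  have hdecay : (fun t ↦ Real.exp (q / 2 * t) * ‖evenKernel 0 t - 1‖) =O[atTop]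
      fun t ↦ Real.exp (-(q / 2) * t) := by
    simp only [if_true] at hO
    refine ((Asymptotics.isBigO_refl (fun t ↦ Real.exp (q / 2 * t)) atTop).mul
      hO.norm_left).congr_right fun t ↦ ?_
    rw [← Real.exp_add]
    ring_nf
  refine (integrable_of_isBigO_exp_neg (half_pos hq) hcont hdecay).congr_fun
    (fun t (ht : 1 < t) ↦ ?_) measurableSet_Ioi
  have hmodif : (hurwitzEvenFEPair 0).f_modif t = ((evenKernel 0 t - 1 : ℝ) : ℂ) := by
    simp [WeakFEPair.f_modif, ht, hurwitzEvenFEPair, not_lt.mpr ht.le]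
  simp only [hmodif, norm_real]

lemma exists_norm_completedRiemannZeta₀_le {ε : ℝ} (hε : 0 < ε) :
    ∃ C, ∀ s : ℂ, 0 ≤ s.re → ‖completedRiemannZeta₀ s‖ ≤ C * Real.exp (ε * ‖s‖ ^ 2) := by
  obtain ⟨p, hp, hint⟩ := exists_integrableOn_exp_mul_f_modif
  obtain ⟨C, hC⟩ := exists_norm_mellin_le hp
    ((hurwitzEvenFEPair 0).isStrongFEPair_toStrongFEPair.hasMellin 0).1 hint hε
  have hC0 : 0 ≤ C := by simpa using (norm_nonneg _).trans (hC 0 le_rfl)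
  refine ⟨C / 2, fun s hs ↦ ?_⟩
  have hhalf : (s / 2).re = s.re / 2 := by simp
  have hmellin := hC (s / 2) (by rw [hhalf]; positivity)
  have hre : (s / 2).re ^ 2 ≤ ‖s‖ ^ 2 := by
    rw [hhalf]
    exact pow_le_pow_left₀ (by positivity) (by linarith [re_le_norm s]) 2
  have hdef : completedRiemannZeta₀ s = mellin (hurwitzEvenFEPair 0).f_modif (s / 2) / 2 := rfl
  rw [hdef, norm_div, norm_ofNat, div_mul_eq_mul_div]
  gcongr
  exact hmellin.trans (by gcongr)

lemma riemannXi_one : riemannXi 1 = 1 := by simp [riemannXi]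

lemma riemannXi_one_sub (s : ℂ) : riemannXi (1 - s) = riemannXi s := by
  simp only [riemannXi, completedRiemannZeta₀_one_sub]
  ring

lemma differentiable_riemannXi : Differentiable ℂ riemannXi := by
  have := differentiable_completedZeta₀
  unfold riemannXi
  fun_prop

lemma exists_norm_riemannXi_le_of_nonneg_re {ε : ℝ} (hε : 0 < ε) :
    ∃ C, 0 ≤ C ∧ ∀ s : ℂ, 0 ≤ s.re → ‖riemannXi s‖ ≤ C * Real.exp (ε * ‖s‖ ^ 2) := by
  obtain ⟨C, hC⟩ := exists_norm_completedRiemannZeta₀_le (half_pos hε)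
  have hC0 : 0 ≤ C := by simpa using (norm_nonneg _).trans (hC 0 le_rfl)
  refine ⟨(4 / ε + 1) * C + 1, by positivity, fun s hs ↦ ?_⟩
  set E := Real.exp (ε / 2 * ‖s‖ ^ 2) with hE
  have hE1 : 1 ≤ E := Real.one_le_exp (by positivity)
  have hpoly : ‖s‖ * ‖s - 1‖ ≤ (4 / ε + 1) * E := by
    have h₁ : ‖s - 1‖ ≤ ‖s‖ + 1 := by simpa using norm_sub_le s 1
    have h₂ : ‖s‖ ^ 2 ≤ 2 / ε * E := by
      have := Real.add_one_le_exp (ε / 2 * ‖s‖ ^ 2)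
      rw [div_mul_eq_mul_div, le_div_iff₀ hε]
      linarith
    have h₃ : 4 / ε * E = 2 * (2 / ε * E) := by ring
    nlinarith [norm_nonneg s, sq_nonneg (‖s‖ - 1)]
  calc ‖riemannXi s‖ ≤ ‖s‖ * ‖s - 1‖ * ‖completedRiemannZeta₀ s‖ + 1 := by
        simpa [riemannXi] using norm_add_le (s * (s - 1) * completedRiemannZeta₀ s) 1
    _ ≤ (4 / ε + 1) * E * (C * E) + E * E := by
        gcongr
        · exact hC s hs
        · exact one_le_mul_of_one_le_of_one_le hE1 hE1
    _ = ((4 / ε + 1) * C + 1) * (E * E) := by ring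
    _ = _ := by rw [hE, ← Real.exp_add]; ring_nf

lemma exists_norm_riemannXi_le {ε : ℝ} (hε : 0 < ε) :
    ∃ C, ∀ s : ℂ, ‖riemannXi s‖ ≤ C * Real.exp (ε * ‖s‖ ^ 2) := by
  obtain ⟨C, hC0, hC⟩ := exists_norm_riemannXi_le_of_nonneg_re (half_pos hε)
  have hbound : ∀ s z : ℂ, ‖z‖ ≤ ‖s‖ + 1 → 0 ≤ z.re →
      ‖riemannXi z‖ ≤ C * Real.exp ε * Real.exp (ε * ‖s‖ ^ 2) := fun s z hz hre ↦ by
    refine (hC z hre).trans ?_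
    rw [mul_assoc, ← Real.exp_add]
    gcongr
    have : ‖z‖ ^ 2 ≤ 2 * ‖s‖ ^ 2 + 2 := by
      nlinarith [norm_nonneg z, norm_nonneg s, sq_nonneg (‖s‖ - 1)]
    nlinarith
  refine ⟨C * Real.exp ε, fun s ↦ ?_⟩
  rcases le_total 0 s.re with hs | hs
  · exact hbound s s (by linarith) hs
  · rw [← riemannXi_one_sub]
    refine hbound s (1 - s) ?_ (by rw [sub_re, one_re]; linarith)
    simpa [add_comm] using norm_sub_le 1 s

lemma xiLike_riemannXi : XiLike riemannXi where
  differentiable := differentiable_riemannXi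
  one_sub := riemannXi_one_sub
  map_one := riemannXi_one
  growth _ := exists_norm_riemannXi_le

lemma riemannXi_eq {s : ℂ} (hs : 0 < s.re) (hs1 : s ≠ 1) :
    riemannXi s = s * (s - 1) * (Gammaℝ s * riemannZeta s) := by
  have hs0 : s ≠ 0 := by rintro rfl; simp at hs
  have hs1' : 1 - s ≠ 0 := sub_ne_zero.mpr hs1.symm
  rw [riemannZeta_def_of_ne_zero hs0, mul_div_cancel₀ _ (Gammaℝ_ne_zero_of_re_pos hs), riemannXi,
    completedRiemannZeta_eq]
  field_simp
  ring

lemma riemannXi_ne_zero_of_one_le_re {s : ℂ} (hs : 1 ≤ s.re) : riemannXi s ≠ 0 := by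
  rcases eq_or_ne s 1 with rfl | hs1
  · simp [riemannXi_one]
  have hpos : 0 < s.re := by linarith
  have hs0 : s ≠ 0 := by rintro rfl; simp at hpos
  rw [riemannXi_eq hpos hs1]
  exact mul_ne_zero (mul_ne_zero hs0 (sub_ne_zero.mpr hs1))
    (mul_ne_zero (Gammaℝ_ne_zero_of_re_pos hpos) (riemannZeta_ne_zero_of_one_le_re hs))

lemma riemannXi_eq_zero_iff {s : ℂ} :
    riemannXi s = 0 ↔ 0 < s.re ∧ s.re < 1 ∧ riemannZeta s = 0 := by
  have hzero (h0 : 0 < s.re) (h1 : s.re < 1) : riemannXi s = 0 ↔ riemannZeta s = 0 := by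
    have hs0 : s ≠ 0 := by rintro rfl; simp at h0
    have hs1 : s ≠ 1 := by rintro rfl; simp at h1
    simp [riemannXi_eq h0 hs1, hs0, sub_ne_zero.mpr hs1, Gammaℝ_ne_zero_of_re_pos h0]
  refine ⟨fun h ↦ ?_, fun ⟨h0, h1, h⟩ ↦ (hzero h0 h1).mpr h⟩
  have h1 : s.re < 1 := by
    by_contra! hs
    exact riemannXi_ne_zero_of_one_le_re hs h
  have h0 : 0 < s.re := by
    by_contra! hs
    exact riemannXi_ne_zero_of_one_le_re (s := 1 - s) (by simpa using hs)
      ((riemannXi_one_sub s).trans h)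
  exact ⟨h0, h1, (hzero h0 h1).mp h⟩

lemma one_le_norm_riemannZeta_natCast {k : ℕ} (hk : 1 < k) : 1 ≤ ‖riemannZeta k‖ := by
  have hreal : riemannZeta k = ((∑' n : ℕ, 1 / (n : ℝ) ^ k : ℝ) : ℂ) := by
    rw [zeta_nat_eq_tsum_of_gt_one hk]
    push_cast
    rfl
  have hone := (Real.summable_one_div_nat_pow.mpr hk).le_tsum 1 fun n _ ↦ by positivity
  rw [hreal, norm_real]
  refine le_trans ?_ (le_abs_self _)
  simpa using hone

lemma norm_Gammaℝ_two_mul_add_one (m : ℕ) :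
    ‖Gammaℝ (2 * (m + 1 : ℕ))‖ = (Real.pi ^ (m + 1))⁻¹ * m.factorial := by
  rw [Gammaℝ_def, norm_mul, norm_cpow_eq_rpow_re_of_pos Real.pi_pos, neg_div,
    mul_div_cancel_left₀ _ two_ne_zero, neg_re, natCast_re, Real.rpow_neg Real.pi_pos.le,
    Real.rpow_natCast, Nat.cast_succ, Gamma_nat_eq_factorial, norm_natCast]

lemma factorial_le_norm_riemannXi (m : ℕ) :
    (m.factorial : ℝ) ≤ Real.pi ^ (m + 1) * ‖riemannXi (2 * (m + 1 : ℕ))‖ := by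
  have hre : 2 ≤ (2 * (m + 1 : ℕ) : ℂ).re := by simp
  have hζ : 1 ≤ ‖riemannZeta (2 * (m + 1 : ℕ))‖ := by
    simpa using one_le_norm_riemannZeta_natCast (show 1 < 2 * (m + 1) by lia)
  have h₁ : 1 ≤ ‖(2 * (m + 1 : ℕ) : ℂ)‖ := le_trans (by linarith) (re_le_norm _)
  have h₂ : 1 ≤ ‖(2 * (m + 1 : ℕ) - 1 : ℂ)‖ :=
    le_trans (by rw [sub_re, one_re]; linarith) (re_le_norm _)
  have hΓ := norm_Gammaℝ_two_mul_add_one m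
  generalize (2 * (m + 1 : ℕ) : ℂ) = s at *
  have hs1 : s ≠ 1 := by
    rintro rfl
    norm_num at h₂
  rw [riemannXi_eq (by linarith) hs1, norm_mul, norm_mul, norm_mul, hΓ]
  calc (m.factorial : ℝ)
      = Real.pi ^ (m + 1) * (1 * 1 * ((Real.pi ^ (m + 1))⁻¹ * m.factorial * 1)) := by field_simp
    _ ≤ _ := by gcongr

lemma exists_norm_polynomial_eval_le_exp (p : Polynomial ℂ) :
    ∃ C, ∀ s, ‖p.eval s‖ ≤ C * Real.exp ‖s‖ := by
  refine ⟨∑ k ∈ Finset.range (p.natDegree + 1), ‖p.coeff k‖ * k.factorial, fun s ↦ ?_⟩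
  rw [Polynomial.eval_eq_sum_range, Finset.sum_mul]
  refine (norm_sum_le _ _).trans (Finset.sum_le_sum fun k _ ↦ ?_)
  have hk := Real.pow_div_factorial_le_exp ‖s‖ (norm_nonneg s) k
  rw [div_le_iff₀' (by positivity)] at hk
  rw [norm_mul, norm_pow, mul_assoc]
  gcongr

lemma riemannXi_ne_polynomial_eval (p : Polynomial ℂ) :
    ¬ ∀ s, riemannXi s = p.eval s := fun hp ↦ by
  obtain ⟨C, hC⟩ := exists_norm_polynomial_eval_le_exp p
  set c := Real.pi * Real.exp 2
  have hle : ∀ m : ℕ, 1 ≤ c * C * (c ^ m / m.factorial) := fun m ↦ by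
    have hm := hC (2 * (m + 1 : ℕ))
    have hexp : Real.exp ‖(2 * (m + 1 : ℕ) : ℂ)‖ = Real.exp 2 ^ (m + 1) := by
      rw [← Real.exp_nat_mul, norm_mul, norm_natCast, norm_ofNat, mul_comm]
    rw [hexp, ← hp] at hm
    rw [mul_div_assoc', one_le_div (by positivity)]
    calc (m.factorial : ℝ) ≤ Real.pi ^ (m + 1) * (C * Real.exp 2 ^ (m + 1)) :=
          (factorial_le_norm_riemannXi m).trans (by gcongr)
      _ = c * C * c ^ m := by simp only [c, mul_pow, pow_succ]; ring
  have hlim := (FloorSemiring.tendsto_pow_div_factorial_atTop c).const_mul (c * C)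
  rw [mul_zero] at hlim
  exact (ge_of_tendsto' hlim hle).not_gt one_pos

lemma infinite_zeros_riemannXi : {ρ | riemannXi ρ = 0}.Infinite := fun hfin ↦
  have ⟨p, hp⟩ := xiLike_riemannXi.exists_polynomial_of_finite_zeros hfin
  riemannXi_ne_polynomial_eval p hp

end RiemannXi

/-- **Li's criterion.** The Riemann Hypothesis holds if and only if `Re(λ_n) > 0`
for every integer `n ≥ 1`. -/
theorem li_criterion :
    (∀ s : ℂ, 0 < s.re → s.re < 1 → riemannZeta s = 0 → s.re = 1 / 2) ↔
      (∀ n : ℕ, 1 ≤ n → 0 < (liCoeff n).re) := by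
  have hcoeff : liCoeff = liCoeffOf riemannXi := rfl
  rw [hcoeff, ← li_criterion_general xiLike_riemannXi infinite_zeros_riemannXi]
  simp only [riemannXi_eq_zero_iff, and_imp]
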